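/- Let G be a connected simple graph on a finite nonempty linearly ordered vertex type V with oriented incidence matrix D, let T be a spanning tree of G, and let S and F be vertices of G. Let d' be the unique integer 1-chain supported on the edges of T with boundary D·d' = 1_F − 1_S. Then every integer 1-chain p' with boundary D·p' = 1_F − 1_S satisfies p' = Σ_{e ∉ T} p'(e)·c_e + d', where the sum runs over the edges e of G not in T, p'(e) denotes the coefficient of p' on e, and c_e is the fundamental cycle of e. -/

import Mathlib

open SimpleGraph Matrix

/-- The oriented incidence matrix of a simple graph on a linearly ordered vertex type:
the column of an edge with endpoints `a < b` has `+1` in row `b`, `-1` in row `a`,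
and `0` elsewhere. -/
def orientedIncMat {V : Type*} [LinearOrder V] (G : SimpleGraph V) :
    Matrix V G.edgeSet ℤ := fun v e =>
  (if v = (e : Sym2 V).sup then 1 else 0) - (if v = (e : Sym2 V).inf then 1 else 0)

theorem vecMul_orientedIncMat {V : Type*} [Fintype V] [LinearOrder V] (G : SimpleGraph V)
    (φ : V → ℤ) (e : G.edgeSet) :
    (φ ᵥ* orientedIncMat G) e = φ (e : Sym2 V).sup - φ (e : Sym2 V).inf := by
  simp [vecMul, dotProduct, orientedIncMat, mul_sub, Finset.sum_sub_distrib]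

/-- A cycle supported on the edges of an acyclic graph vanishes. -/
theorem eq_zero_of_orientedIncMat_mulVec_eq_zero {V : Type*} [Fintype V] [LinearOrder V]
    {G T : SimpleGraph V} [Fintype G.edgeSet] (hT : T.IsAcyclic) {x : G.edgeSet → ℤ}
    (hsupp : ∀ e : G.edgeSet, (e : Sym2 V) ∉ T.edgeSet → x e = 0)
    (hx : orientedIncMat G *ᵥ x = 0) : x = 0 := by
  classical
  funext e
  by_cases he : (e : Sym2 V) ∈ T.edgeSet
  swap
  · exact hsupp e he
  obtain ⟨e, heG⟩ := e
  induction e using Sym2.ind with | _ a b =>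
  have hbridge : ¬ (T.deleteEdges {s(a, b)}).Reachable a b :=
    isBridge_iff.1 (isAcyclic_iff_forall_isBridge.1 hT he)
  -- Pair the boundary with the indicator of the component of `a` in `T` minus the edge.
  let φ : V → ℤ := fun v => if (T.deleteEdges {s(a, b)}).Reachable a v then 1 else 0
  have hφa : φ a = 1 := if_pos (Reachable.refl a)
  have hφb : φ b = 0 := if_neg hbridge
  have hsum : ∑ f, (φ ᵥ* orientedIncMat G) f * x f = 0 := by
    change (φ ᵥ* orientedIncMat G) ⬝ᵥ x = 0
    rw [← dotProduct_mulVec, hx, dotProduct_zero]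
  rw [Finset.sum_eq_single ⟨s(a, b), heG⟩ ?_ (by simp), vecMul_orientedIncMat] at hsum
  · rcases le_total a b with h | h <;> simpa [h, hφa, hφb] using hsum
  · rintro ⟨f, hfG⟩ - hne
    by_cases hf : f ∈ T.edgeSet
    swap
    · simp [hsupp ⟨f, hfG⟩ hf]
    induction f using Sym2.ind with | _ u v =>
    have hadj : (T.deleteEdges {s(a, b)}).Adj u v := by
      rw [deleteEdges_adj]
      exact ⟨hf, fun h => hne (Subtype.ext h)⟩
    have hφ : φ u = φ v := by
      have hiff : (T.deleteEdges {s(a, b)}).Reachable a u ↔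
          (T.deleteEdges {s(a, b)}).Reachable a v :=
        ⟨fun h => h.trans hadj.reachable, fun h => h.trans hadj.symm.reachable⟩
      simp only [φ, hiff]
    rw [vecMul_orientedIncMat]
    rcases le_total u v with h | h <;> simp [h, hφ]

open scoped Classical in
theorem chain_eq_fundamental_cycles_add_default {V : Type*} [Fintype V] [Nonempty V]
    [LinearOrder V] (G T : SimpleGraph V) [DecidableRel G.Adj] (hG : G.Connected)
    (hTG : T ≤ G) (hT : T.IsTree) (S F : V)
    (d' : G.edgeSet → ℤ)
    (hd'supp : ∀ e : G.edgeSet, (e : Sym2 V) ∉ T.edgeSet → d' e = 0)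
    (hd'bd : orientedIncMat G *ᵥ d' = Pi.single F 1 - Pi.single S 1)
    (c : {e : G.edgeSet // (e : Sym2 V) ∉ T.edgeSet} → G.edgeSet → ℤ)
    (hcycle : ∀ e, orientedIncMat G *ᵥ c e = 0)
    (hone : ∀ e, c e e.1 = 1)
    (hzero : ∀ e (f : G.edgeSet), (f : Sym2 V) ∉ T.edgeSet → f ≠ e.1 → c e f = 0)
    (p' : G.edgeSet → ℤ)
    (hp' : orientedIncMat G *ᵥ p' = Pi.single F 1 - Pi.single S 1) :
    p' = (∑ e, p' e.1 • c e) + d' := by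
  rw [← sub_eq_zero]
  refine eq_zero_of_orientedIncMat_mulVec_eq_zero hT.isAcyclic (fun e he => ?_) ?_
  · have hsum : ∑ f, p' f.1 * c f e = p' e := by
      rw [Finset.sum_eq_single ⟨e, he⟩ _ (by simp), hone ⟨e, he⟩, mul_one]
      intro f _ hf
      rw [hzero f e he fun h => hf (Subtype.ext h.symm), mul_zero]
    simp [hd'supp e he, hsum]
  · simp [-zsmul_eq_mul, mulVec_sub, mulVec_add, mulVec_sum, mulVec_smul, hcycle, hp', hd'bd]
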